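/- Let Γ be an n-rose labeled graph with all labels positive, and let γ = (e₁,…,eₛ,e) be a strict monotone cycle in Γ for some s ≥ 0. Suppose Γ′ is obtained from Γ by a single slide move of eᵢ or ēᵢ (for some 1 ≤ i ≤ s) over the edge e. Then Γ′ contains a strict monotone cycle. -/

import Mathlib

/-! Labeled graphs in the sense of generalized Baumslag–Solitar theory. -/

structure LGraph (V E : Type) where
  o : E → V
  bar : E → E
  bar_bar : ∀ e, bar (bar e) = e
  bar_ne : ∀ e, bar e ≠ e
  lab : E → ℤ

namespace LGraph

variable {V E V' E' : Type}

/-- Terminal vertex of an oriented edge. -/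
def t (G : LGraph V E) (e : E) : V := G.o (G.bar e)

/-- All labels are positive. -/
def Positive (G : LGraph V E) : Prop := ∀ e : E, 0 < G.lab e

/-- No collapsible edge: every label-1 edge is a loop. -/
def Reduced (G : LGraph V E) : Prop := ∀ e : E, G.lab e = 1 → G.o e = G.t e

/-- An `n`-rose: one vertex and `n` pairs of oriented edges. -/
def IsRose (G : LGraph V E) (n : ℕ) : Prop :=
  Nat.card V = 1 ∧ Nat.card E = 2 * n

/-- Modulus of a single oriented edge: `λ(ē)/λ(e)`. -/
def qe (G : LGraph V E) (e : E) : ℚ := (G.lab (G.bar e) : ℚ) / (G.lab e : ℚ)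

/-- Modulus of an edge path. -/
def q (G : LGraph V E) (l : List E) : ℚ := (l.map G.qe).prod

/-- Consecutive edges match up. -/
def IsEdgePath (G : LGraph V E) (l : List E) : Prop :=
  List.Chain' (fun a b => G.t a = G.o b) l

/-- An `e`-edge path. -/
def IsEEdgePath (G : LGraph V E) (e : E) (l : List E) : Prop :=
  G.IsEdgePath l ∧
  (∀ a ∈ l, a ≠ e ∧ a ≠ G.bar e) ∧
  (∀ a ∈ l.head?, G.o a = G.o e) ∧
  ∀ i : Fin l.length, ∃ k : ℤ,
    (G.lab e : ℚ) * G.q (l.take i.1) = (k : ℚ) * (G.lab (l.get i) : ℚ)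

/-- A monotone cycle `(e₁,…,eₛ,e)`. -/
def IsMonotoneCycle (G : LGraph V E) (l : List E) (e : E) : Prop :=
  G.IsEEdgePath (G.bar e) l ∧
  G.t (l.getLastD e) = G.o e ∧
  ∃ k : ℤ, G.q (l ++ [e]) = (k : ℚ)

/-- A strict monotone cycle. -/
def IsStrictMonotoneCycle (G : LGraph V E) (l : List E) (e : E) : Prop :=
  G.IsMonotoneCycle l e ∧ G.q (l ++ [e]) ≠ 1

def HasStrictMonotoneCycle (G : LGraph V E) : Prop :=
  ∃ (l : List E) (e : E), G.IsStrictMonotoneCycle l e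

/-- A strict `e`-integer cycle. -/
def IsStrictIntegerCycle (G : LGraph V E) (e : E) (l : List E) : Prop :=
  G.IsEEdgePath e l ∧ l ≠ [] ∧
  G.t (l.getLastD e) = G.o (l.headD e) ∧
  (∃ k : ℤ, G.q l = (k : ℚ)) ∧ G.q l ≠ 1

/-- A mobile edge. -/
def Mobile (G : LGraph V E) (e : E) : Prop :=
  (∃ l, G.IsStrictMonotoneCycle l e ∨ G.IsStrictMonotoneCycle l (G.bar e)) ∨
  (∃ l, G.IsStrictIntegerCycle e l ∨ G.IsStrictIntegerCycle (G.bar e) l)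

/-- The single slide of `e` over `f` is permitted. -/
def CanSlide (G : LGraph V E) (e f : E) : Prop :=
  f ≠ e ∧ f ≠ G.bar e ∧ G.o f = G.o e ∧ G.lab f ∣ G.lab e

open Classical in
/-- The result of the single slide of `e` over `f`. -/
noncomputable def slide (G : LGraph V E) (e f : E) : LGraph V E where
  o := fun x => if x = e then G.t f else G.o x
  bar := G.bar
  bar_bar := G.bar_bar
  bar_ne := G.bar_ne
  lab := fun x => if x = e then G.lab e * G.lab (G.bar f) / G.lab f else G.lab x

/-- Successively slide `e` over the edges of a path. -/
noncomputable def slidePath : LGraph V E → E → List E → LGraph V E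
  | G, _, [] => G
  | G, e, f :: l => slidePath (G.slide e f) e l

/-- Each single slide in the successive slide of `e` over a path is permitted. -/
def CanSlidePath : LGraph V E → E → List E → Prop
  | _, _, [] => True
  | G, e, f :: l => G.CanSlide e f ∧ CanSlidePath (G.slide e f) e l

/-- Each single slide is permitted and each intermediate graph is reduced. -/
def GoodSlidePath : LGraph V E → E → List E → Prop
  | _, _, [] => True
  | G, e, f :: l => G.CanSlide e f ∧ (G.slide e f).Reduced ∧ GoodSlidePath (G.slide e f) e l

/-- Perform a finite sequence of single slides, given as pairs (slid edge, edge slid over). -/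
noncomputable def slideSeq : LGraph V E → List (E × E) → LGraph V E
  | G, [] => G
  | G, p :: rest => slideSeq (G.slide p.1 p.2) rest

/-- A sequence of permitted single slides, each sliding a mobile edge. -/
def MobileSlideSeq : LGraph V E → List (E × E) → Prop
  | _, [] => True
  | G, p :: rest => G.Mobile p.1 ∧ G.CanSlide p.1 p.2 ∧ MobileSlideSeq (G.slide p.1 p.2) rest

/-- Isomorphism of labeled graphs. -/
def Isom (G : LGraph V E) (G' : LGraph V' E') : Prop :=
  ∃ (φ : V → V') (Φ : E → E'),
    Function.Bijective φ ∧ Function.Bijective Φ ∧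
    (∀ x, G'.o (Φ x) = φ (G.o x)) ∧
    (∀ x, G'.bar (Φ x) = Φ (G.bar x)) ∧
    (∀ x, G'.lab (Φ x) = G.lab x)

open Classical in
/-- The result of the induction move at the loop `e` with multiplier `m`. -/
noncomputable def inductionMove (G : LGraph V E) (e : E) (m : ℤ) : LGraph V E where
  o := G.o
  bar := G.bar
  bar_bar := G.bar_bar
  bar_ne := G.bar_ne
  lab := fun x => if x ≠ e ∧ x ≠ G.bar e ∧ G.o x = G.o e then m * G.lab x else G.lab x

/-- `G'` is obtained from `G` by a single slide move (up to isomorphism). -/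
def IsSlideMove (G : LGraph V E) (G' : LGraph V' E') : Prop :=
  ∃ e f, G.CanSlide e f ∧ Isom G' (G.slide e f)

/-- `G'` is obtained from `G` by a (forward) induction move. -/
def IsInductionMove (G : LGraph V E) (G' : LGraph V' E') : Prop :=
  ∃ (e : E) (m : ℤ), G.o e = G.t e ∧ G.lab e = 1 ∧ 1 ≤ m ∧ m ∣ G.lab (G.bar e) ∧
    Isom G' (G.inductionMove e m)

/-- `G'` is obtained from `G` by an A-move. -/
def IsAMove (G : LGraph V E) (G' : LGraph V' E') : Prop :=
  ∃ (e d : E) (e' : E') (φ : V → V') (Φ : E → E'),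
    G.o e = G.t e ∧ G.lab e = 1 ∧ G.lab (G.bar e) ≠ 1 ∧
    G.o d = G.o e ∧ G.t d ≠ G.o e ∧
    G.lab d ≠ 1 ∧ G.lab (G.bar d) ≠ 1 ∧ G.lab d ∣ G.lab (G.bar e) ∧
    (∀ x : E, G.o x = G.o e → x = e ∨ x = G.bar e ∨ x = d) ∧
    G'.o e' = φ (G.t d) ∧ G'.t e' = φ (G.t d) ∧
    G'.lab e' = G.lab (G.bar d) ∧
    G'.lab (G'.bar e') = G.lab (G.bar d) * G.lab (G.bar e) ∧
    (∀ w₁ w₂ : V, w₁ ≠ G.o e → w₂ ≠ G.o e → φ w₁ = φ w₂ → w₁ = w₂) ∧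
    (∀ v' : V', ∃ w : V, w ≠ G.o e ∧ φ w = v') ∧
    (∀ x : E, x ≠ e → x ≠ G.bar e → x ≠ d → x ≠ G.bar d →
      Φ x ≠ e' ∧ Φ x ≠ G'.bar e' ∧
      G'.o (Φ x) = φ (G.o x) ∧ G'.bar (Φ x) = Φ (G.bar x) ∧ G'.lab (Φ x) = G.lab x) ∧
    (∀ x y : E, x ≠ e → x ≠ G.bar e → x ≠ d → x ≠ G.bar d →
      y ≠ e → y ≠ G.bar e → y ≠ d → y ≠ G.bar d → Φ x = Φ y → x = y) ∧
    (∀ y : E', y ≠ e' → y ≠ G'.bar e' →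
      ∃ x : E, x ≠ e ∧ x ≠ G.bar e ∧ x ≠ d ∧ x ≠ G.bar d ∧ Φ x = y)

/-- A strict ascending loop: a loop with `λ(e) = 1 ≠ λ(ē)`. -/
def HasStrictAscendingLoop (G : LGraph V E) : Prop :=
  ∃ e : E, G.o e = G.t e ∧ G.lab e = 1 ∧ G.lab (G.bar e) ≠ 1

end LGraph

/-- A labeled graph with its vertex and edge types bundled. -/
structure BGraph where
  V : Type
  E : Type
  G : LGraph V E

/-- An elementary deformation move: a slide, an induction move or its inverse,
or an A-move or its inverse. -/
def BGraph.ElemMove (X Y : BGraph) : Prop :=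
  LGraph.IsSlideMove X.G Y.G ∨ LGraph.IsInductionMove X.G Y.G ∨
  LGraph.IsInductionMove Y.G X.G ∨ LGraph.IsAMove X.G Y.G ∨ LGraph.IsAMove Y.G X.G

/-- A finite sequence of elementary moves with all intermediate graphs reduced. -/
def BGraph.MoveSeq : BGraph → BGraph → Prop :=
  Relation.ReflTransGen (fun X Y => X.ElemMove Y ∧ Y.G.Reduced)

/-- A reduced labeled graph is non-ascending if no reduced labeled graph obtained from it
by slide, induction and A-moves (all intermediate graphs reduced) contains a
strict ascending loop. -/
def LGraph.NonAscending {V E : Type} (G : LGraph V E) : Prop :=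
  ∀ Y : BGraph, BGraph.MoveSeq ⟨V, E, G⟩ Y → ¬ Y.G.HasStrictAscendingLoop

/-!
View a pair `(v, N)` of a vertex and an integer as a level, which an edge `x` carries from
`(o x, k * λ(x))` to `(t x, k * λ(x̄))`. A strict monotone cycle `(l, e)` is a path `l` avoiding `e`
that carries `(t e, λ(ē))` to `(o e, m * λ(e))` with `m ≠ 1`.

Write `λ(g) = c * λ(e)`, and let `p` be the part of `l` before its first visit to `g` or `ḡ`, so
that `p` survives the slide of `g` over `e`. If `p` ends by reaching `g` at level `k * λ(g)`, then
`(p, e)` is a monotone cycle of modulus `k * c`; if it reaches `ḡ` at level `k * λ(ḡ)`, then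
`(p, ḡ)` is one after the slide. When `k * c = 1` that cycle is not strict, but then a detour
along `p` has the same effect on levels as the old edge `g`: this is `p⁻¹ g` in the first case and
`e p` in the second. Let `l'` be `l` with each visit to `g` replaced by the detour. In the first
case `(l', e)` is the required cycle; in the second `l'` uses `e` but no longer `g`, and
`(p⁻¹ l' e, g)` is.
-/

namespace LGraph

variable {V E : Type} {G : LGraph V E}

theorem t_bar (x : E) : G.t (G.bar x) = G.o x := by rw [t, G.bar_bar]

theorem bar_eq_comm {x y : E} : G.bar x = y ↔ x = G.bar y :=
  ⟨fun h => by rw [← h, G.bar_bar], fun h => by rw [h, G.bar_bar]⟩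

theorem bar_injective : Function.Injective G.bar :=
  Function.LeftInverse.injective G.bar_bar

/-! ### Paths avoiding an edge -/

/-- The path `l` uses neither `e` nor `ē`. -/
def Avoids (G : LGraph V E) (l : List E) (e : E) : Prop := ∀ a ∈ l, a ≠ e ∧ a ≠ G.bar e

/-- The path `l` traversed backwards. -/
def reversePath (G : LGraph V E) (l : List E) : List E := (l.map G.bar).reverse

open Classical in
/-- The path which replaces `x` when the path `A` is substituted for `g` (and hence the reverse of
`A` for `ḡ`). -/
noncomputable def replaceEdge (G : LGraph V E) (g : E) (A : List E) (x : E) : List E :=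
  if x = g then A else if x = G.bar g then G.reversePath A else [x]

theorem avoids_bar {l : List E} {e : E} : G.Avoids l (G.bar e) ↔ G.Avoids l e := by
  simp only [Avoids, bar_bar, and_comm]

theorem Avoids.reversePath {l : List E} {e : E} (h : G.Avoids l e) :
    G.Avoids (G.reversePath l) e := by
  intro a ha
  obtain ⟨b, hb, rfl⟩ := List.mem_map.1 (List.mem_reverse.1 ha)
  exact ⟨bar_eq_comm.not.2 (h b hb).2, bar_injective.ne (h b hb).1⟩

theorem Avoids.flatMap_replaceEdge {f g : E} {A l : List E} (hA : G.Avoids A f)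
    (hl : ∀ x ∈ l, x ≠ g → x ≠ G.bar g → x ≠ f ∧ x ≠ G.bar f) :
    G.Avoids (l.flatMap (G.replaceEdge g A)) f := by
  intro a ha
  obtain ⟨x, hx, hax⟩ := List.mem_flatMap.1 ha
  unfold replaceEdge at hax
  split_ifs at hax with hxg hxg'
  · exact hA a hax
  · exact hA.reversePath a hax
  · rw [List.mem_singleton.1 hax]
    exact hl x hx hxg hxg'

/-! ### Levels carried along paths -/

/-- `G.Carries (v, N) l (w, M)`: the path `l` leads from `v` to `w`, and multiplying `N` by
the moduli of its edges one after another gives `M`, where the label of each edge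
divides the integer that reaches it. -/
inductive Carries (G : LGraph V E) : V × ℤ → List E → V × ℤ → Prop
  | nil (a : V × ℤ) : Carries G a [] a
  | cons {x : E} {l : List E} {b : V × ℤ} (k : ℤ)
      (h : Carries G (G.t x, k * G.lab (G.bar x)) l b) : Carries G (G.o x, k * G.lab x) (x :: l) b

theorem carries_nil {a b : V × ℤ} : G.Carries a [] b ↔ a = b :=
  ⟨fun | .nil _ => rfl, fun h => h ▸ .nil a⟩

theorem carries_cons {v : V} {N : ℤ} {x : E} {l : List E} {b : V × ℤ} :
    G.Carries (v, N) (x :: l) b ↔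
      v = G.o x ∧ ∃ k, N = k * G.lab x ∧ G.Carries (G.t x, k * G.lab (G.bar x)) l b :=
  ⟨fun | .cons k h => ⟨rfl, k, rfl, h⟩, by rintro ⟨rfl, k, rfl, h⟩; exact .cons k h⟩

theorem carries_singleton (x : E) (k : ℤ) :
    G.Carries (G.o x, k * G.lab x) [x] (G.t x, k * G.lab (G.bar x)) :=
  .cons k (.nil _)

namespace Carries

variable {a b c : V × ℤ} {l l' : List E}

theorem append (h : G.Carries a l b) (h' : G.Carries b l' c) : G.Carries a (l ++ l') c := by
  induction h with
  | nil _ => exact h'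
  | cons k _ ih => exact .cons k (ih h')

theorem mul (n : ℤ) (h : G.Carries a l b) : G.Carries (a.1, n * a.2) l (b.1, n * b.2) := by
  induction h with
  | nil _ => exact .nil _
  | cons k _ ih =>
    simp only [← mul_assoc] at ih ⊢
    exact .cons (n * k) ih

theorem reversePath (h : G.Carries a l b) : G.Carries b (G.reversePath l) a := by
  induction h with
  | nil _ => exact .nil _
  | @cons x _ _ k _ ih =>
    have back := carries_singleton (G := G) (G.bar x) k
    rw [t_bar, bar_bar] at back
    simpa only [LGraph.reversePath, List.map_cons, List.reverse_cons] using ih.append back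

theorem exists_prefix {x : E} (h : G.Carries a (l ++ x :: l') b) :
    ∃ k, G.Carries a l (G.o x, k * G.lab x) := by
  induction l generalizing a with
  | nil => cases h with | cons k _ => exact ⟨k, .nil _⟩
  | cons y l ih => cases h with | cons k h => exact (ih h).imp fun _ => .cons k

theorem flatMap {E' : Type} {G' : LGraph V E'} {φ : E → List E'}
    (hφ : ∀ x ∈ l, G'.Carries (G.o x, G.lab x) (φ x) (G.t x, G.lab (G.bar x)))
    (h : G.Carries a l b) : G'.Carries a (l.flatMap φ) b := by
  induction h with
  | nil _ => exact .nil _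
  | cons k _ ih =>
    rw [List.forall_mem_cons] at hφ
    exact (hφ.1.mul k).append (ih hφ.2)

end Carries

/-! ### Monotone cycles in terms of levels -/

/-- The divisibility condition of an edge path, started at the integer `N`: the label of each edge
divides `N` times the modulus of the part of the path before it. -/
def LabelsDivide (G : LGraph V E) (N : ℤ) (l : List E) : Prop :=
  ∀ i : Fin l.length, ∃ k : ℤ, (N : ℚ) * G.q (l.take i) = k * G.lab (l.get i)

theorem mul_q_cons {x : E} (hx : G.lab x ≠ 0) (k : ℤ) (l : List E) :
    ((k * G.lab x : ℤ) : ℚ) * G.q (x :: l) = (k * G.lab (G.bar x) : ℤ) * G.q l := by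
  have : (G.lab x : ℚ) ≠ 0 := Int.cast_ne_zero.2 hx
  simp only [q, qe, List.map_cons, List.prod_cons]
  push_cast
  field_simp

theorem labelsDivide_cons {x : E} (hx : G.lab x ≠ 0) {N : ℤ} {l : List E} :
    G.LabelsDivide N (x :: l) ↔
      ∃ k : ℤ, N = k * G.lab x ∧ G.LabelsDivide (k * G.lab (G.bar x)) l := by
  have head (k : ℤ) : (N : ℚ) * G.q [] = k * G.lab x ↔ N = k * G.lab x := by
    simp only [q, List.map_nil, List.prod_nil, mul_one]
    norm_cast
  refine Fin.forall_fin_succ.trans ?_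
  simp only [Fin.val_zero, List.take_zero, List.get_cons_zero, Fin.val_succ, List.take_succ_cons,
    List.get_cons_succ', head, ← exists_and_right]
  refine exists_congr fun k => and_congr_right ?_
  rintro rfl
  simp only [mul_q_cons hx, LabelsDivide]

theorem carries_iff (h0 : ∀ x, G.lab x ≠ 0) {e : E} {N M : ℤ} {w : V} {l : List E} :
    G.Carries (G.t e, N) l (w, M) ↔
      G.IsEdgePath (e :: l) ∧ G.t (l.getLastD e) = w ∧ G.LabelsDivide N l ∧ N * G.q l = M := by
  induction l generalizing e N with
  | nil =>
    have hpath : G.IsEdgePath [e] := List.isChain_singleton e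
    simp [carries_nil, hpath, LabelsDivide, q]
  | cons x l ih =>
    have hpath : G.IsEdgePath (e :: x :: l) ↔ G.t e = G.o x ∧ G.IsEdgePath (x :: l) :=
      List.isChain_cons_cons
    rw [carries_cons, hpath, List.getLastD_cons, labelsDivide_cons (h0 x), and_assoc]
    refine and_congr_right fun _ => ⟨?_, ?_⟩
    · rintro ⟨k, rfl, h⟩
      obtain ⟨path, last, div, modulus⟩ := ih.1 h
      exact ⟨path, last, ⟨k, rfl, div⟩, (mul_q_cons (h0 x) k l).trans modulus⟩
    · rintro ⟨path, last, ⟨k, rfl, div⟩, modulus⟩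
      exact ⟨k, rfl, ih.2 ⟨path, last, div, (mul_q_cons (h0 x) k l).symm.trans modulus⟩⟩

theorem q_append_singleton_eq_iff {e : E} (he : G.lab e ≠ 0) {l : List E} {m : ℤ} :
    G.q (l ++ [e]) = m ↔ G.lab (G.bar e) * G.q l = (m * G.lab e : ℤ) := by
  have he' : (G.lab e : ℚ) ≠ 0 := Int.cast_ne_zero.2 he
  have hq : G.q (l ++ [e]) = G.lab (G.bar e) * G.q l / G.lab e := by
    simp only [q, qe, List.map_append, List.map_singleton, List.prod_append, List.prod_singleton]
    ring
  rw [hq, div_eq_iff he', Int.cast_mul]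

theorem isEEdgePath_bar_iff {e : E} {l : List E} :
    G.IsEEdgePath (G.bar e) l ↔
      G.Avoids l e ∧ G.IsEdgePath (e :: l) ∧ G.LabelsDivide (G.lab (G.bar e)) l := by
  have hpath : G.IsEdgePath (e :: l) ↔ (∀ a ∈ l.head?, G.t e = G.o a) ∧ G.IsEdgePath l :=
    List.isChain_cons
  have horigin : (∀ a ∈ l.head?, G.o a = G.o (G.bar e)) ↔ ∀ a ∈ l.head?, G.t e = G.o a :=
    forall₂_congr fun _ _ => eq_comm
  rw [← avoids_bar, hpath, ← horigin]
  unfold IsEEdgePath Avoids LabelsDivide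
  tauto

theorem isStrictMonotoneCycle_iff (h0 : ∀ x, G.lab x ≠ 0) {l : List E} {e : E} :
    G.IsStrictMonotoneCycle l e ↔ G.Avoids l e ∧
      ∃ m : ℤ, m ≠ 1 ∧ G.Carries (G.t e, G.lab (G.bar e)) l (G.o e, m * G.lab e) := by
  simp only [carries_iff h0, IsStrictMonotoneCycle, IsMonotoneCycle, isEEdgePath_bar_iff,
    ← q_append_singleton_eq_iff (h0 e)]
  constructor
  · rintro ⟨⟨⟨avoids, path, div⟩, last, m, hm⟩, strict⟩
    exact ⟨avoids, m, by simpa only [hm, ne_eq, Int.cast_eq_one] using strict, path, last, div, hm⟩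
  · rintro ⟨avoids, m, strict, path, last, div, hm⟩
    exact ⟨⟨⟨avoids, path, div⟩, last, m, hm⟩, by rwa [hm, ne_eq, Int.cast_eq_one]⟩

/-! ### Effect of a slide -/

section Slide

variable {e g : E} {c : ℤ}

theorem slide_bar (x : E) : (G.slide g e).bar x = G.bar x := rfl

theorem slide_o_self : (G.slide g e).o g = G.t e := if_pos rfl

theorem slide_o_of_ne {x : E} (hx : x ≠ g) : (G.slide g e).o x = G.o x := if_neg hx

theorem slide_t_of_ne {x : E} (hx : x ≠ G.bar g) : (G.slide g e).t x = G.t x :=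
  slide_o_of_ne (bar_eq_comm.not.2 hx)

theorem slide_lab_self (he : G.lab e ≠ 0) (hc : G.lab g = c * G.lab e) :
    (G.slide g e).lab g = c * G.lab (G.bar e) := by
  have hlab : (G.slide g e).lab g = G.lab g * G.lab (G.bar e) / G.lab e := if_pos rfl
  rw [hlab, hc, mul_right_comm, Int.mul_ediv_cancel _ he]

theorem slide_lab_of_ne {x : E} (hx : x ≠ g) : (G.slide g e).lab x = G.lab x := if_neg hx

theorem slide_lab_bar_of_ne {x : E} (hx : x ≠ G.bar g) :
    (G.slide g e).lab (G.bar x) = G.lab (G.bar x) :=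
  slide_lab_of_ne (bar_eq_comm.not.2 hx)

theorem slide_lab_ne_zero (h0 : ∀ x, G.lab x ≠ 0) (hc : G.lab g = c * G.lab e) (x : E) :
    (G.slide g e).lab x ≠ 0 := by
  by_cases hx : x = g
  · have hc0 : c ≠ 0 := left_ne_zero_of_mul (hc ▸ h0 g)
    rw [hx, slide_lab_self (h0 e) hc]
    exact mul_ne_zero hc0 (h0 _)
  · rw [slide_lab_of_ne hx]
    exact h0 x

theorem carries_slide_singleton {x : E} (hx : x ≠ g) (hx' : x ≠ G.bar g) (k : ℤ) :
    (G.slide g e).Carries (G.o x, k * G.lab x) [x] (G.t x, k * G.lab (G.bar x)) := by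
  simpa only [slide_bar, slide_o_of_ne hx, slide_t_of_ne hx', slide_lab_of_ne hx,
    slide_lab_bar_of_ne hx'] using carries_singleton (G := G.slide g e) x k

theorem carries_slide_self (he : G.lab e ≠ 0) (hc : G.lab g = c * G.lab e) :
    (G.slide g e).Carries (G.t e, c * G.lab (G.bar e)) [g] (G.t g, G.lab (G.bar g)) := by
  have hg : g ≠ G.bar g := (G.bar_ne g).symm
  simpa only [slide_bar, one_mul, slide_o_self, slide_t_of_ne hg, slide_lab_self he hc,
    slide_lab_bar_of_ne hg] using carries_singleton (G := G.slide g e) g 1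

theorem Carries.slide {a b : V × ℤ} {l : List E} (h : G.Carries a l b) (hl : G.Avoids l g) :
    (G.slide g e).Carries a l b := by
  have edge (x : E) (hx : x ∈ l) := carries_slide_singleton (e := e) (hl x hx).1 (hl x hx).2 1
  simp only [one_mul] at edge
  simpa only [List.flatMap_singleton'] using h.flatMap edge

theorem Carries.slide_replaceEdge {a b : V × ℤ} {l A : List E} (h : G.Carries a l b)
    (hA : (G.slide g e).Carries (G.o g, G.lab g) A (G.t g, G.lab (G.bar g))) :
    (G.slide g e).Carries a (l.flatMap (G.replaceEdge g A)) b := by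
  refine h.flatMap fun x _ => ?_
  unfold replaceEdge
  split_ifs with hx hx'
  · rwa [hx]
  · rw [hx', t_bar, bar_bar]
    exact hA.reversePath
  · simpa only [one_mul] using carries_slide_singleton hx hx' 1

/-! ### Strict monotone cycles after the slide -/

variable {p l : List E} {k m : ℤ}

theorem isStrictMonotoneCycle_slide_iff (h0 : ∀ x, G.lab x ≠ 0) (hs : G.CanSlide g e) :
    (G.slide g e).IsStrictMonotoneCycle l e ↔ G.Avoids l e ∧ ∃ m : ℤ, m ≠ 1 ∧
      (G.slide g e).Carries (G.t e, G.lab (G.bar e)) l (G.o e, m * G.lab e) := by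
  obtain ⟨hne, hne', -, c, hc⟩ := hs
  rw [isStrictMonotoneCycle_iff (slide_lab_ne_zero h0 (hc.trans (mul_comm _ _))), slide_bar,
    slide_o_of_ne hne, slide_t_of_ne hne', slide_lab_of_ne hne, slide_lab_bar_of_ne hne']
  rfl

theorem isStrictMonotoneCycle_slide_prefix (h0 : ∀ x, G.lab x ≠ 0) (hs : G.CanSlide g e)
    (hpe : G.Avoids p e) (hpg : G.Avoids p g) (hm : m ≠ 1)
    (hp : G.Carries (G.t e, G.lab (G.bar e)) p (G.o e, m * G.lab e)) :
    (G.slide g e).IsStrictMonotoneCycle p e :=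
  (isStrictMonotoneCycle_slide_iff h0 hs).2 ⟨hpe, m, hm, hp.slide hpg⟩

theorem isStrictMonotoneCycle_slide_prefix_bar (h0 : ∀ x, G.lab x ≠ 0)
    (hc : G.lab g = c * G.lab e) (hpg : G.Avoids p g) (hck : c * k ≠ 1)
    (hp : G.Carries (G.t e, G.lab (G.bar e)) p (G.t g, k * G.lab (G.bar g))) :
    (G.slide g e).IsStrictMonotoneCycle p (G.bar g) := by
  refine (isStrictMonotoneCycle_iff (slide_lab_ne_zero h0 hc)).2
    ⟨avoids_bar.2 hpg, c * k, hck, ?_⟩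
  rw [← slide_bar (e := e), t_bar, bar_bar, slide_o_self, slide_lab_self (h0 e) hc, slide_bar,
    slide_o_of_ne (G.bar_ne g), slide_lab_of_ne (G.bar_ne g), mul_assoc]
  exact (hp.slide hpg).mul c

theorem isStrictMonotoneCycle_slide_replaceEdge (h0 : ∀ x, G.lab x ≠ 0) (hs : G.CanSlide g e)
    (hl : G.IsStrictMonotoneCycle l e) (hpe : G.Avoids p e) (hpg : G.Avoids p g)
    (hp : G.Carries (G.t e, G.lab (G.bar e)) p (G.o e, G.lab e)) :
    (G.slide g e).IsStrictMonotoneCycle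
      (l.flatMap (G.replaceEdge g (G.reversePath p ++ [g]))) e := by
  obtain ⟨hle, m, hm, hlm⟩ := (isStrictMonotoneCycle_iff h0).1 hl
  have ⟨hne, hne', ho, c, hc⟩ := hs
  rw [mul_comm] at hc
  have hge : G.Avoids [g] e :=
    List.forall_mem_singleton.2 ⟨hne.symm, fun h => hne' (bar_eq_comm.1 h.symm)⟩
  have detour_avoids : G.Avoids (G.reversePath p ++ [g]) e :=
    List.forall_mem_append.2 ⟨hpe.reversePath, hge⟩
  have detour : (G.slide g e).Carries (G.o g, G.lab g) (G.reversePath p ++ [g])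
      (G.t g, G.lab (G.bar g)) := by
    rw [← ho, hc]
    exact ((hp.slide hpg).reversePath.mul c).append (carries_slide_self (h0 e) hc)
  exact (isStrictMonotoneCycle_slide_iff h0 hs).2
    ⟨detour_avoids.flatMap_replaceEdge fun x hx _ _ => hle x hx, m, hm,
      hlm.slide_replaceEdge detour⟩

theorem isStrictMonotoneCycle_slide_replaceEdge_self (h0 : ∀ x, G.lab x ≠ 0)
    (hs : G.CanSlide g e) (hl : G.IsStrictMonotoneCycle l e) (hc : G.lab g = c * G.lab e)
    (hpg : G.Avoids p g) (hck : c * k = 1)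
    (hp : G.Carries (G.t e, G.lab (G.bar e)) p (G.t g, k * G.lab (G.bar g))) :
    (G.slide g e).IsStrictMonotoneCycle
      (G.reversePath p ++ l.flatMap (G.replaceEdge g (e :: p)) ++ [e]) g := by
  obtain ⟨-, m, hm, hlm⟩ := (isStrictMonotoneCycle_iff h0).1 hl
  obtain ⟨hne, hne', ho, -⟩ := hs
  have heg : G.Avoids [e] g := List.forall_mem_singleton.2 ⟨hne, hne'⟩
  have detour_avoids : G.Avoids (e :: p) g := List.forall_mem_cons.2 ⟨⟨hne, hne'⟩, hpg⟩
  have hp' : (G.slide g e).Carries (G.t e, c * G.lab (G.bar e)) p (G.t g, G.lab (G.bar g)) := by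
    simpa only [← mul_assoc, hck, one_mul] using (hp.slide hpg).mul c
  have he (n : ℤ) := carries_slide_singleton (e := e) hne hne' n
  have detour : (G.slide g e).Carries (G.o g, G.lab g) (e :: p) (G.t g, G.lab (G.bar g)) := by
    rw [← ho, hc]
    exact (he c).append hp'
  have loop := (hlm.slide_replaceEdge detour).mul c
  simp only [← mul_assoc] at loop
  refine (isStrictMonotoneCycle_iff (slide_lab_ne_zero h0 hc)).2 ⟨?_, m, hm, ?_⟩
  · exact List.forall_mem_append.2 ⟨List.forall_mem_append.2 ⟨hpg.reversePath,
      detour_avoids.flatMap_replaceEdge fun _ _ hx hx' => ⟨hx, hx'⟩⟩, heg⟩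
  · rw [slide_bar, slide_o_self, slide_t_of_ne (G.bar_ne g).symm, slide_lab_self (h0 e) hc,
      slide_lab_of_ne (G.bar_ne g), ← mul_assoc, mul_comm m c]
    exact (hp'.reversePath.append loop).append (he (c * m))

end Slide

theorem exists_eq_append_cons_avoids {l : List E} {g : E} (hg : g ∈ l ∨ G.bar g ∈ l) :
    ∃ p y r, l = p ++ y :: r ∧ (y = g ∨ y = G.bar g) ∧ G.Avoids p g := by
  classical
  obtain ⟨x, hx, hxg⟩ : ∃ x ∈ l, x = g ∨ x = G.bar g :=
    hg.elim (fun h => ⟨_, h, .inl rfl⟩) (fun h => ⟨_, h, .inr rfl⟩)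
  obtain ⟨y, p, r, hp, hy, hl, -⟩ :=
    List.exists_of_eraseP (p := fun x => decide (x = g ∨ x = G.bar g)) hx (decide_eq_true hxg)
  exact ⟨p, y, r, hl, of_decide_eq_true hy, fun a ha => by simpa using hp a ha⟩

end LGraph

theorem stmt1_general {V E : Type} (G : LGraph V E) (h0 : ∀ x, G.lab x ≠ 0)
    (l : List E) (e : E) (hsmc : G.IsStrictMonotoneCycle l e)
    (g : E) (hg : g ∈ l ∨ G.bar g ∈ l) (hcan : G.CanSlide g e) :
    (G.slide g e).HasStrictMonotoneCycle := by
  obtain ⟨hle, m, -, hlm⟩ := (LGraph.isStrictMonotoneCycle_iff h0).1 hsmc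
  have ⟨_, _, ho, c, hc⟩ := hcan
  rw [mul_comm] at hc
  obtain ⟨p, y, r, rfl, hy, hpg⟩ := LGraph.exists_eq_append_cons_avoids hg
  have hpe : G.Avoids p e := (List.forall_mem_append.1 hle).1
  obtain ⟨k, hp⟩ := hlm.exists_prefix
  obtain rfl | rfl := hy
  · rw [← ho, hc, ← mul_assoc] at hp
    by_cases hkc : k * c = 1
    · rw [hkc, one_mul] at hp
      exact ⟨_, e, LGraph.isStrictMonotoneCycle_slide_replaceEdge h0 hcan hsmc hpe hpg hp⟩
    · exact ⟨p, e, LGraph.isStrictMonotoneCycle_slide_prefix h0 hcan hpe hpg hkc hp⟩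
  · by_cases hck : c * k = 1
    · exact ⟨_, g, LGraph.isStrictMonotoneCycle_slide_replaceEdge_self h0 hcan hsmc hc hpg hck hp⟩
    · exact ⟨p, G.bar g, LGraph.isStrictMonotoneCycle_slide_prefix_bar h0 hc hpg hck hp⟩

/-- In an `n`-rose with positive labels carrying a strict monotone cycle
`(e₁,…,eₛ,e)`, sliding some `eᵢ` or `ēᵢ` over the edge `e` yields a graph which again
contains a strict monotone cycle. -/
theorem stmt1 {V E : Type} [Finite V] [Finite E] (G : LGraph V E) (n : ℕ)
    (hrose : G.IsRose n) (hpos : G.Positive)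
    (l : List E) (e : E) (hsmc : G.IsStrictMonotoneCycle l e)
    (g : E) (hg : g ∈ l ∨ G.bar g ∈ l)
    (hcan : G.CanSlide g e) :
    (G.slide g e).HasStrictMonotoneCycle :=
  stmt1_general G (fun x => (hpos x).ne') l e hsmc g hg hcan
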